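/- Let n ∈ ℕ and let Z_1, …, Z_n ∈ L^1, and define the risk profiles g_i(p) = ES_p(Z_i) for p ∈ [0,1] and i = 1, …, n. Then for every X ∈ L^1, the inf-convolution satisfies (□_{i=1}^n ES^{g_i})(X) = ES^{g_1+⋯+g_n}(X); that is, the inf-convolution of benchmark-adjusted Expected Shortfalls is itself an adjusted Expected Shortfall with risk profile equal to the sum of the individual profiles. -/

import Mathlib

open MeasureTheory Set Filter

variable {Ω : Type*} [MeasurableSpace Ω]

/-- An atomless probability space: every set of positive measure has a subset of
strictly smaller positive measure. -/
def Atomless (μ : Measure Ω) : Prop :=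
  ∀ A : Set Ω, MeasurableSet A → 0 < μ A →
    ∃ B : Set Ω, MeasurableSet B ∧ B ⊆ A ∧ 0 < μ B ∧ μ B < μ A

/-- Value at Risk at level `p`: the left `p`-quantile for `p ∈ (0,1]`, the essential
infimum for `p = 0`.  Values are extended reals. -/
noncomputable def VaR (μ : Measure Ω) (X : Ω → ℝ) (p : ℝ) : EReal :=
  if p = 0 then essInf (fun ω => (X ω : EReal)) μ
  else sInf ((fun x : ℝ => (x : EReal)) '' {x : ℝ | ENNReal.ofReal p ≤ μ {ω | X ω ≤ x}})

/-- Real-valued version of the left `p`-quantile, used as the integrand of ES. -/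
noncomputable def VaRr (μ : Measure Ω) (X : Ω → ℝ) (p : ℝ) : ℝ :=
  sInf {x : ℝ | ENNReal.ofReal p ≤ μ {ω | X ω ≤ x}}

/-- Expected Shortfall at level `p`: `(1/(1-p)) ∫_p^1 VaR_q(X) dq` for `p ∈ [0,1)`,
the essential supremum for `p = 1`. -/
noncomputable def ES (μ : Measure Ω) (X : Ω → ℝ) (p : ℝ) : EReal :=
  if p = 1 then essSup (fun ω => (X ω : EReal)) μ
  else (((1 - p)⁻¹ * ∫ q in Set.Ioo p 1, VaRr μ X q : ℝ) : EReal)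

/-- The `g`-adjusted Expected Shortfall, `sup_{p ∈ [0,1]} (ES_p(X) - g(p))`.
Note that in `EReal` one has `⊤ - ⊤ = ⊥`, matching the convention `∞ - ∞ = -∞`. -/
noncomputable def adjES (μ : Measure Ω) (g : ℝ → EReal) (X : Ω → ℝ) : EReal :=
  ⨆ p ∈ Set.Icc (0:ℝ) 1, (ES μ X p - g p)

/-- The class `𝒢` of risk profiles: increasing functions `[0,1] → (-∞,∞]` that are
not identically `∞`. -/
def IsRiskProfile (g : ℝ → EReal) : Prop :=
  MonotoneOn g (Set.Icc (0:ℝ) 1) ∧ (∀ p ∈ Set.Icc (0:ℝ) 1, g p ≠ ⊥) ∧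
    ∃ p ∈ Set.Icc (0:ℝ) 1, g p ≠ ⊤

/-- Second-order stochastic dominance: `SSD μ X Y` means `X ≥_SSD Y`, i.e. every
risk-averse agent prefers `X` to `Y` (positive values are losses). -/
def SSD (μ : Measure Ω) (X Y : Ω → ℝ) : Prop :=
  ∀ u : ℝ → ℝ, Monotone u → ConcaveOn ℝ Set.univ u →
    ∫ ω, u (-(Y ω)) ∂μ ≤ ∫ ω, u (-(X ω)) ∂μ

/-- The inf-convolution of the functionals `ρ_1, …, ρ_n`. -/
noncomputable def infConv (μ : Measure Ω) {n : ℕ} (ρ : Fin n → ((Ω → ℝ) → EReal))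
    (X : Ω → ℝ) : EReal :=
  ⨅ (Y : Fin n → Ω → ℝ) (_ : (∀ i, Integrable (Y i) μ) ∧ ∀ ω, (∑ i, Y i ω) = X ω),
    ∑ i, ρ i (Y i)

/-- The class `𝒢_VaR`: risk profiles finite on `[0,1)`, left-continuous on `[0,1]`
and right-continuous at `0`. -/
def GVaRProfile (g : ℝ → EReal) : Prop :=
  IsRiskProfile g ∧ (∀ p ∈ Set.Ico (0:ℝ) 1, g p ≠ ⊤) ∧
    (∀ p ∈ Set.Ioc (0:ℝ) 1, Filter.Tendsto g (nhdsWithin p (Set.Ico 0 p)) (nhds (g p))) ∧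
    Filter.Tendsto g (nhdsWithin 0 (Set.Ioc 0 1)) (nhds (g 0))

/-- The class `𝒢_ES`: profiles in `𝒢_VaR` such that `h_g(p) = (1-p)g(p)` is concave
on `(0,1)` and left-continuous at `1` (with `h_g(1) = 0` by the convention `0·∞ = 0`). -/
def GESProfile (g : ℝ → EReal) : Prop :=
  GVaRProfile g ∧ ConcaveOn ℝ (Set.Ioo (0:ℝ) 1) (fun p => (1 - p) * (g p).toReal) ∧
    Filter.Tendsto (fun p => (1 - p) * (g p).toReal) (nhdsWithin 1 (Set.Ico (0:ℝ) 1)) (nhds 0)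

lemma env_mid (d : ℝ → ℝ) (hc : ContinuousOn d (Ioo 0 1))
    (hmid : ∀ z ∈ Ioo (0:ℝ) 1, ∀ δ > 0, ∃ t, 0 < t ∧ t < δ ∧ (d (z - t) + d (z + t)) / 2 ≤ d z) :
    ConcaveOn ℝ (Ioo 0 1) d := by
  refine concaveOn_of_slope_anti_adjacent (convex_Ioo 0 1) ?_
  intro x y z hx hz hxy hyz
  by_contra hcon
  push Not at hcon
  set s := (d z - d x) / (z - x) with hs
  have hzx : 0 < z - x := by linarith
  have hsz : s * (z - x) = d z - d x := by rw [hs]; field_simp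
  let e : ℝ → ℝ := fun q => d q - (d x + s * (q - x))
  have hsub : Icc x z ⊆ Ioo (0:ℝ) 1 := fun q hq => ⟨lt_of_lt_of_le hx.1 hq.1, lt_of_le_of_lt hq.2 hz.2⟩
  have hec : ContinuousOn e (Icc x z) := by
    apply ContinuousOn.sub (hc.mono hsub)
    fun_prop
  have hey : e y < 0 := by
    have h1 : 0 < y - x := by linarith
    have h2 : 0 < z - y := by linarith
    rw [div_lt_div_iff₀ h1 h2] at hcon
    have : (z - x) * e y < 0 := by
      simp only [e]
      have : (z - x) * (d y - (d x + s * (y - x))) = (z-x) * (d y - d x) - (y - x) * (d z - d x) := by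
        rw [← hsz]; ring
      rw [this]; nlinarith
    by_contra h
    push Not at h
    nlinarith
  obtain ⟨z1, hz1, hmin⟩ := isCompact_Icc.exists_isMinOn ⟨x, left_mem_Icc.2 (by linarith)⟩ hec
  -- leftmost minimiser
  let M := Icc x z ∩ e ⁻¹' {e z1}
  have hMc : IsClosed M := hec.preimage_isClosed_of_isClosed isClosed_Icc isClosed_singleton
  have hMne : M.Nonempty := ⟨z1, hz1, rfl⟩
  have hMb : BddBelow M := ⟨x, fun q hq => hq.1.1⟩
  have hz0 : sInf M ∈ M := hMc.csInf_mem hMne hMb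
  set z0 := sInf M with hz0d
  have hez0 : e z0 = e z1 := hz0.2
  have hneg : e z0 < 0 := by rw [hez0]; exact lt_of_le_of_lt (hmin ⟨hxy.le, hyz.le⟩) hey
  have hex : e x = 0 := by simp [e]
  have hez : e z = 0 := by simp only [e]; rw [hsz]; ring
  have hx0 : x < z0 := lt_of_le_of_ne hz0.1.1 (by intro h; rw [← h] at hneg; linarith)
  have h0z : z0 < z := lt_of_le_of_ne hz0.1.2 (by intro h; rw [h] at hneg; linarith)
  obtain ⟨t, ht, htd, hle⟩ := hmid z0 (hsub hz0.1) (min (z0 - x) (z - z0)) (lt_min (by linarith) (by linarith))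
  have ht1 := lt_of_lt_of_le htd (min_le_left _ _)
  have ht2 := lt_of_lt_of_le htd (min_le_right _ _)
  have hl : e (z0 - t) > e z1 := by
    have hm : z0 - t ∈ Icc x z := ⟨by linarith, by linarith⟩
    refine lt_of_le_of_ne (hmin hm) ?_
    intro h
    have : z0 ≤ z0 - t := csInf_le hMb ⟨hm, h.symm⟩
    linarith
  have hr : e (z0 + t) ≥ e z1 := hmin (show z0 + t ∈ Icc x z from ⟨by linarith, by linarith⟩)
  rw [← hez0] at hl hr
  simp only [e] at hl hr
  linarith

lemma env (u v h : ℝ → ℝ) (hu : ConcaveOn ℝ (Ioo 0 1) u) (hv : ConcaveOn ℝ (Ioo 0 1) v)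
    (hh : ConcaveOn ℝ (Ioo 0 1) h) (hle : ∀ p ∈ Ioo (0:ℝ) 1, u p ≤ h p + v p) :
    ∃ w : ℝ → ℝ, ConcaveOn ℝ (Ioo 0 1) w ∧ ConcaveOn ℝ (Ioo 0 1) (fun p => u p - w p) ∧
      ∀ p ∈ Ioo (0:ℝ) 1, w p ≤ h p ∧ u p - w p ≤ v p := by
  let C : Set (ℝ → ℝ) := {φ | ConcaveOn ℝ (Ioo 0 1) φ ∧ ∀ z ∈ Ioo (0:ℝ) 1, u z - v z ≤ φ z}
  let w : ℝ → ℝ := fun x => sInf ((fun φ : ℝ → ℝ => φ x) '' C)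
  have hhC : h ∈ C := ⟨hh, fun z hz => by linarith [hle z hz]⟩
  have hbdd : ∀ x ∈ Ioo (0:ℝ) 1, BddBelow ((fun φ : ℝ → ℝ => φ x) '' C) := by
    intro x hx
    refine ⟨u x - v x, ?_⟩
    rintro _ ⟨φ, hφ, rfl⟩
    exact hφ.2 x hx
  have hwle : ∀ φ ∈ C, ∀ x ∈ Ioo (0:ℝ) 1, w x ≤ φ x := fun φ hφ x hx =>
    csInf_le (hbdd x hx) ⟨φ, hφ, rfl⟩
  have hlew : ∀ x c, (∀ φ ∈ C, c ≤ φ x) → c ≤ w x := by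
    intro x c hc
    refine le_csInf ⟨_, h, hhC, rfl⟩ ?_
    rintro _ ⟨φ, hφ, rfl⟩
    exact hc φ hφ
  have hwG : ∀ x ∈ Ioo (0:ℝ) 1, u x - v x ≤ w x := fun x hx => hlew x _ fun φ hφ => hφ.2 x hx
  have hw : ConcaveOn ℝ (Ioo 0 1) w := by
    refine ⟨convex_Ioo 0 1, ?_⟩
    intro x hx y hy a b ha hb hab
    apply hlew
    intro φ hφ
    refine le_trans ?_ (hφ.1.2 hx hy ha hb hab)
    have h1 := hwle φ hφ x hx
    have h2 := hwle φ hφ y hy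
    simp only [smul_eq_mul]
    gcongr
  refine ⟨w, hw, ?_, fun p hp => ⟨hwle h hhC p hp, by linarith [hwG p hp]⟩⟩
  have huc := hu.continuousOn isOpen_Ioo
  have hvc := hv.continuousOn isOpen_Ioo
  have hwc := hw.continuousOn isOpen_Ioo
  apply env_mid _ (huc.sub hwc)
  intro z hz δ hδ
  have hmidc : ∀ f : ℝ → ℝ, ConcaveOn ℝ (Ioo 0 1) f → ∀ t, z - t ∈ Ioo (0:ℝ) 1 → z + t ∈ Ioo (0:ℝ) 1 →
      (f (z - t) + f (z + t)) / 2 ≤ f z := by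
    intro f hf t h1 h2
    have := hf.2 h1 h2 (show (0:ℝ) ≤ 1/2 by norm_num) (show (0:ℝ) ≤ 1/2 by norm_num) (by norm_num)
    simp only [smul_eq_mul] at this
    have e : 1 / 2 * (z - t) + 1 / 2 * (z + t) = z := by ring
    rw [e] at this
    linarith
  rcases eq_or_lt_of_le (hwG z hz) with heq | hlt
  · obtain ⟨δ', hδ', hI⟩ := Metric.isOpen_iff.1 isOpen_Ioo z hz
    refine ⟨min δ δ' / 2, by positivity, by linarith [min_le_left δ δ', lt_min hδ hδ'], ?_⟩
    set t := min δ δ' / 2 with ht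
    have ht0 : 0 < t := by positivity
    have htd : t < δ' := by linarith [min_le_right δ δ', lt_min hδ hδ']
    have h1 : z - t ∈ Ioo (0:ℝ) 1 := hI (by simp [abs_of_pos ht0, htd])
    have h2 : z + t ∈ Ioo (0:ℝ) 1 := hI (by simp [abs_of_pos ht0, htd])
    have := hmidc v hv t h1 h2
    have := hwG _ h1
    have := hwG _ h2
    simp only [Pi.sub_apply]
    linarith
  · set ε := w z - (u z - v z) with hε
    have hε0 : 0 < ε := by linarith
    have hn : Ioo (0:ℝ) 1 ∈ nhds z := isOpen_Ioo.mem_nhds hz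
    have c1 : ∀ᶠ y in nhds z, w z - ε / 2 < w y :=
      (hwc.continuousAt hn).eventually (lt_mem_nhds (by linarith))
    have c2 : ∀ᶠ y in nhds z, u y - v y < w z - ε / 2 :=
      ((huc.sub hvc).continuousAt hn).eventually (gt_mem_nhds (show u z - v z < _ by linarith))
    obtain ⟨δ', hδ', hI⟩ := Metric.eventually_nhds_iff.1 ((c1.and c2).and hn)
    refine ⟨min δ δ' / 2, by positivity, by linarith [min_le_left δ δ', lt_min hδ hδ'], ?_⟩
    set t := min δ δ' / 2 with ht
    have ht0 : 0 < t := by positivity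
    have htd : t < δ' := by linarith [min_le_right δ δ', lt_min hδ hδ']
    have hin : ∀ y, z - t ≤ y → y ≤ z + t → (w z - ε / 2 < w y ∧ u y - v y < w z - ε / 2) ∧ y ∈ Ioo (0:ℝ) 1 := by
      intro y h1 h2
      apply hI
      rw [Real.dist_eq, abs_lt]
      constructor <;> linarith
    have ha := hin (z - t) le_rfl (by linarith)
    have hb := hin (z + t) (by linarith) le_rfl
    set a := z - t with had
    set b := z + t with hbd
    have hab : 0 < b - a := by linarith
    set s := (w b - w a) / (b - a) with hs
    have hsab : s * (b - a) = w b - w a := by rw [hs]; field_simp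
    let ℓ : ℝ → ℝ := fun y => w a + s * (y - a)
    have hℓ : ConcaveOn ℝ (Ioo 0 1) ℓ := by
      refine ⟨convex_Ioo 0 1, ?_⟩
      intro x hx y hy p q hp hq hpq
      simp only [ℓ, smul_eq_mul]
      have : q = 1 - p := by linarith
      subst this
      apply le_of_eq
      ring
    have hout : ∀ y ∈ Ioo (0:ℝ) 1, y < a ∨ b < y → w y ≤ ℓ y := by
      intro y hy hor
      rcases hor with h1 | h1
      · have := hw.slope_anti_adjacent hy hb.2 h1 (by linarith)
        rw [← hs, le_div_iff₀ (by linarith)] at this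
        simp only [ℓ]; linarith
      · have := hw.slope_anti_adjacent ha.2 hy (by linarith) h1
        rw [← hs, div_le_iff₀ (by linarith)] at this
        simp only [ℓ]; linarith
    have hφ : (w ⊓ ℓ) ∈ C := by
      refine ⟨hw.inf hℓ, ?_⟩
      intro y hy
      refine le_inf (hwG y hy) ?_
      by_cases h1 : y < a
      · exact (hwG y hy).trans (hout y hy (Or.inl h1))
      by_cases h2 : b < y
      · exact (hwG y hy).trans (hout y hy (Or.inr h2))
      push Not at h1 h2
      have h3 := (hin y h1 h2).1.2
      refine h3.le.trans ?_
      have e1 : (b - a) * ℓ y = (b - y) * w a + (y - a) * w b := by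
        simp only [ℓ]
        have : w b = w a + s * (b - a) := by linarith
        rw [this]; ring
      have h4 : (b - y) * (w z - ε / 2) ≤ (b - y) * w a :=
        mul_le_mul_of_nonneg_left ha.1.1.le (by linarith)
      have h5 : (y - a) * (w z - ε / 2) ≤ (y - a) * w b :=
        mul_le_mul_of_nonneg_left hb.1.1.le (by linarith)
      have h6 : (b - a) * (w z - ε / 2) ≤ (b - a) * ℓ y := by rw [e1]; linarith
      exact le_of_mul_le_mul_left h6 hab
    have h7 : w z ≤ ℓ z := (hwle _ hφ z hz).trans inf_le_right
    have h8 : ℓ z = (w a + w b) / 2 := by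
      simp only [ℓ]
      have h9 : z - a = (b - a) / 2 := by rw [had, hbd]; ring
      rw [h9]; linarith
    have := hmidc u hu t ha.2 hb.2
    simp only [Pi.sub_apply]
    linarith

lemma VaRr_mem_iff (μ : Measure Ω) [IsProbabilityMeasure μ] {X : Ω → ℝ} (hX : AEMeasurable X μ)
    (q x : ℝ) :
    ENNReal.ofReal q ≤ μ {ω | X ω ≤ x} ↔ q ≤ ProbabilityTheory.cdf (μ.map X) x := by
  have := Measure.isProbabilityMeasure_map hX
  have h : μ {ω | X ω ≤ x} = (μ.map X) (Iic x) := by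
    rw [Measure.map_apply_of_aemeasurable hX measurableSet_Iic]; rfl
  rw [h, ← ProbabilityTheory.ofReal_cdf,
    ENNReal.ofReal_le_ofReal_iff (ProbabilityTheory.cdf_nonneg _ _)]

lemma VaRr_le_iff (μ : Measure Ω) [IsProbabilityMeasure μ] {X : Ω → ℝ} (hX : AEMeasurable X μ)
    {q : ℝ} (hq : q ∈ Ioo (0:ℝ) 1) (x : ℝ) :
    VaRr μ X q ≤ x ↔ q ≤ ProbabilityTheory.cdf (μ.map X) x := by
  set F := ProbabilityTheory.cdf (μ.map X) with hF
  have hS : VaRr μ X q = sInf {x : ℝ | q ≤ F x} := by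
    unfold VaRr
    congr 1
    ext x
    exact VaRr_mem_iff μ hX q x
  have hne : {x : ℝ | q ≤ F x}.Nonempty := by
    have := (ProbabilityTheory.tendsto_cdf_atTop (μ.map X)).eventually (lt_mem_nhds hq.2)
    obtain ⟨y, hy⟩ := this.exists
    exact ⟨y, hy.le⟩
  have hbd : BddBelow {x : ℝ | q ≤ F x} := by
    have := (ProbabilityTheory.tendsto_cdf_atBot (μ.map X)).eventually (gt_mem_nhds hq.1)
    obtain ⟨y, hy⟩ := this.exists
    refine ⟨y, fun x hx => ?_⟩
    by_contra h
    push Not at h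
    have h1 : F x ≤ F y := F.mono h.le
    have h2 : q ≤ F x := hx
    linarith
  rw [hS]
  constructor
  · intro h
    have key : q ≤ F (sInf {x : ℝ | q ≤ F x}) := by
      have hc := (F.right_continuous (sInf {x : ℝ | q ≤ F x})).mono Ioi_subset_Ici_self
      refine ge_of_tendsto hc ?_
      filter_upwards [self_mem_nhdsWithin] with y hy
      obtain ⟨s, hs, hsy⟩ := exists_lt_of_csInf_lt hne hy
      exact le_trans hs (F.mono hsy.le)
    exact key.trans (F.mono h)
  · intro h
    exact csInf_le hbd h

lemma VaRr_mono (μ : Measure Ω) [IsProbabilityMeasure μ] {X : Ω → ℝ} (hX : AEMeasurable X μ) :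
    MonotoneOn (VaRr μ X) (Ioo 0 1) := by
  intro p hp q hq hpq
  rw [VaRr_le_iff μ hX hp]
  exact hpq.trans ((VaRr_le_iff μ hX hq _).1 le_rfl)

lemma VaRr_aem (μ : Measure Ω) [IsProbabilityMeasure μ] {X : Ω → ℝ} (hX : AEMeasurable X μ) :
    AEMeasurable (VaRr μ X) (volume.restrict (Ioo 0 1)) :=
  aemeasurable_restrict_of_monotoneOn measurableSet_Ioo (VaRr_mono μ hX)

lemma VaRr_map (μ : Measure Ω) [IsProbabilityMeasure μ] {X : Ω → ℝ} (hX : AEMeasurable X μ) :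
    Measure.map (VaRr μ X) (volume.restrict (Ioo 0 1)) = μ.map X := by
  have := Measure.isProbabilityMeasure_map hX
  have : IsProbabilityMeasure (volume.restrict (Ioo (0:ℝ) 1)) := ⟨by simp⟩
  have := Measure.isProbabilityMeasure_map (VaRr_aem μ hX)
  refine Measure.ext_of_Iic _ _ fun x => ?_
  rw [Measure.map_apply_of_aemeasurable (VaRr_aem μ hX) measurableSet_Iic,
    Measure.restrict_apply' measurableSet_Ioo, ← ProbabilityTheory.ofReal_cdf (μ.map X)]
  set c := ProbabilityTheory.cdf (μ.map X) x with hc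
  have h0 : 0 ≤ c := ProbabilityTheory.cdf_nonneg _ _
  have h1 : c ≤ 1 := ProbabilityTheory.cdf_le_one _ _
  have hs : VaRr μ X ⁻¹' Iic x ∩ Ioo 0 1 = Iic c ∩ Ioo 0 1 := by
    ext q
    constructor
    · rintro ⟨ha, hb⟩
      exact ⟨(VaRr_le_iff μ hX hb x).1 ha, hb⟩
    · rintro ⟨ha, hb⟩
      exact ⟨(VaRr_le_iff μ hX hb x).2 ha, hb⟩
  rw [hs]
  apply le_antisymm
  · calc volume (Iic c ∩ Ioo 0 1) ≤ volume (Ioc 0 c) := by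
          apply measure_mono
          rintro q ⟨ha, hb⟩
          exact ⟨hb.1, ha⟩
      _ = _ := by simp
  · calc ENNReal.ofReal c = volume (Ioo 0 c) := by simp
      _ ≤ _ := by
          apply measure_mono
          rintro q ⟨ha, hb⟩
          exact ⟨hb.le, ha, lt_of_lt_of_le hb h1⟩

lemma VaRr_integral (μ : Measure Ω) [IsProbabilityMeasure μ] {X : Ω → ℝ} (hX : AEMeasurable X μ)
    {φ : ℝ → ℝ} (hφ : Continuous φ) :
    ∫ q in Ioo 0 1, φ (VaRr μ X q) = ∫ ω, φ (X ω) ∂μ := by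
  rw [← integral_map hX hφ.aestronglyMeasurable, ← VaRr_map μ hX,
    integral_map (VaRr_aem μ hX) hφ.aestronglyMeasurable]

lemma VaRr_integrable (μ : Measure Ω) [IsProbabilityMeasure μ] {X : Ω → ℝ} (hX : Integrable X μ) :
    IntegrableOn (VaRr μ X) (Ioo 0 1) := by
  have h := hX.aemeasurable
  have h1 : Integrable (fun x : ℝ => x) (μ.map X) :=
    (integrable_map_measure continuous_id.aestronglyMeasurable h).2 hX
  rw [← VaRr_map μ h] at h1
  exact (integrable_map_measure continuous_id.aestronglyMeasurable (VaRr_aem μ h)).1 h1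

lemma VaRr_comp (μ : Measure Ω) [IsProbabilityMeasure μ] {X : Ω → ℝ} (hX : AEMeasurable X μ)
    {f : ℝ → ℝ} (hf : Monotone f) (hfc : Continuous f) {q : ℝ} (hq : q ∈ Ioo (0:ℝ) 1) :
    VaRr μ (fun ω => f (X ω)) q = f (VaRr μ X q) := by
  have hfX : AEMeasurable (fun ω => f (X ω)) μ := hfc.measurable.comp_aemeasurable hX
  apply le_antisymm
  · rw [VaRr_le_iff μ hfX hq, ← VaRr_mem_iff μ hfX]
    refine le_trans ((VaRr_mem_iff μ hX q (VaRr μ X q)).2 ((VaRr_le_iff μ hX hq _).1 le_rfl)) ?_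
    exact measure_mono fun ω hω => hf hω
  · by_contra h
    push Not at h
    have h1 := (VaRr_mem_iff μ hfX q _).2 ((VaRr_le_iff μ hfX hq _).1 le_rfl)
    set y := VaRr μ (fun ω => f (X ω)) q
    have h2 : ∀ᶠ x in nhdsWithin (VaRr μ X q) (Iio (VaRr μ X q)), y < f x :=
      (hfc.continuousAt.eventually (lt_mem_nhds h)).filter_mono nhdsWithin_le_nhds
    obtain ⟨x, hx1, hx2⟩ := (h2.and self_mem_nhdsWithin).exists
    have h3 : VaRr μ X q ≤ x := by
      rw [VaRr_le_iff μ hX hq, ← VaRr_mem_iff μ hX]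
      refine h1.trans (measure_mono fun ω hω => ?_)
      have hω' : f (X ω) ≤ y := hω
      show X ω ≤ x
      by_contra h4
      push Not at h4
      have := hf h4.le
      linarith
    exact absurd hx2 (not_lt.2 h3)

/-- tail integral -/
noncomputable def TH (μ : Measure Ω) (X : Ω → ℝ) (p : ℝ) : ℝ := ∫ q in Ioo p 1, VaRr μ X q

lemma TH_sub (p : ℝ) (hp : 0 ≤ p) : Ioo p 1 ⊆ Ioo (0:ℝ) 1 := Ioo_subset_Ioo_left hp

lemma TH_zero (μ : Measure Ω) [IsProbabilityMeasure μ] {X : Ω → ℝ} (hX : Integrable X μ) :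
    TH μ X 0 = ∫ ω, X ω ∂μ := VaRr_integral μ hX.aemeasurable continuous_id

lemma VaRr_pos_integrable (μ : Measure Ω) [IsProbabilityMeasure μ] {X : Ω → ℝ} (hX : Integrable X μ)
    (x : ℝ) : IntegrableOn (fun q => max (VaRr μ X q - x) 0) (Ioo 0 1) :=
  ((VaRr_integrable μ hX).sub (integrable_const x)).pos_part

lemma TH_le (μ : Measure Ω) [IsProbabilityMeasure μ] {X : Ω → ℝ} (hX : Integrable X μ)
    {p : ℝ} (hp : p ∈ Ico (0:ℝ) 1) (x : ℝ) :
    TH μ X p ≤ (1 - p) * x + ∫ ω, max (X ω - x) 0 ∂μ := by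
  have hs := TH_sub p hp.1
  have i1 := (VaRr_integrable μ hX).mono_set hs
  have i2 := (VaRr_pos_integrable μ hX x)
  rw [← VaRr_integral μ hX.aemeasurable (φ := fun y => max (y - x) 0) (by fun_prop)]
  have ic : IntegrableOn (fun _ : ℝ => x) (Ioo p 1) := integrable_const x
  have e1 : (1 - p) * x = ∫ q in Ioo p 1, x := by
    rw [setIntegral_const]; simp [hp.2.le]
  calc TH μ X p ≤ ∫ q in Ioo p 1, (x + max (VaRr μ X q - x) 0) := by
        apply setIntegral_mono i1 (ic.add (i2.mono_set hs))
        intro q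
        show VaRr μ X q ≤ x + max (VaRr μ X q - x) 0
        linarith [le_max_left (VaRr μ X q - x) 0]
    _ = (1 - p) * x + ∫ q in Ioo p 1, max (VaRr μ X q - x) 0 := by
        rw [integral_add ic (i2.mono_set hs), e1]
    _ ≤ _ := by
        gcongr
        exact ae_of_all _ fun q => le_max_right _ _

lemma TH_eq (μ : Measure Ω) [IsProbabilityMeasure μ] {X : Ω → ℝ} (hX : Integrable X μ)
    {p : ℝ} (hp : p ∈ Ioo (0:ℝ) 1) :
    TH μ X p = (1 - p) * VaRr μ X p + ∫ ω, max (X ω - VaRr μ X p) 0 ∂μ := by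
  have hs := TH_sub p hp.1.le
  set x := VaRr μ X p with hx
  have hm := VaRr_mono μ hX.aemeasurable
  have i1 := (VaRr_integrable μ hX).mono_set hs
  have i2 := (VaRr_pos_integrable μ hX x)
  rw [← VaRr_integral μ hX.aemeasurable (φ := fun y => max (y - x) 0) (by fun_prop)]
  have ic : IntegrableOn (fun _ : ℝ => x) (Ioo p 1) := integrable_const x
  have e1 : (1 - p) * x = ∫ q in Ioo p 1, x := by
    rw [setIntegral_const]; simp [hp.2.le]
  have e2 : ∫ q in Ioo 0 1, max (VaRr μ X q - x) 0 = ∫ q in Ioo p 1, max (VaRr μ X q - x) 0 := by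
    apply setIntegral_eq_of_subset_of_forall_sdiff_eq_zero measurableSet_Ioo hs
    rintro q ⟨hq, hq2⟩
    have : q ≤ p := by
      by_contra h
      push Not at h
      exact hq2 ⟨h, hq.2⟩
    exact max_eq_right (by linarith [hm hq hp this])
  rw [e2, e1, ← integral_add ic (i2.mono_set hs)]
  apply setIntegral_congr_fun measurableSet_Ioo
  intro q hq
  have := hm hp (hs hq) hq.1.le
  show VaRr μ X q = x + max (VaRr μ X q - x) 0
  rw [max_eq_left (by linarith)]
  ring

lemma TH_concave (μ : Measure Ω) [IsProbabilityMeasure μ] {X : Ω → ℝ} (hX : Integrable X μ) :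
    ConcaveOn ℝ (Ioo 0 1) (TH μ X) := by
  refine ⟨convex_Ioo 0 1, ?_⟩
  intro p hp q hq a b ha hb hab
  have hr := (convex_Ioo (0:ℝ) 1) hp hq ha hb hab
  rw [TH_eq μ hX hr]
  have h1 := TH_le μ hX ⟨hp.1.le, hp.2⟩ (VaRr μ X (a • p + b • q))
  have h2 := TH_le μ hX ⟨hq.1.le, hq.2⟩ (VaRr μ X (a • p + b • q))
  simp only [smul_eq_mul] at *
  have h3 := mul_le_mul_of_nonneg_left h1 ha
  have h4 := mul_le_mul_of_nonneg_left h2 hb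
  obtain rfl : b = 1 - a := by linarith
  nlinarith

lemma TH_sum_le (μ : Measure Ω) [IsProbabilityMeasure μ] {n : ℕ} {Y : Fin n → Ω → ℝ} {X : Ω → ℝ}
    (hX : Integrable X μ) (hY : ∀ i, Integrable (Y i) μ) (hs : ∀ ω, ∑ i, Y i ω = X ω)
    {p : ℝ} (hp : p ∈ Ico (0:ℝ) 1) : TH μ X p ≤ ∑ i, TH μ (Y i) p := by
  rcases eq_or_lt_of_le hp.1 with h0 | h0
  · subst h0
    rw [TH_zero μ hX]
    simp_rw [fun i => TH_zero μ (hY i), ← hs]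
    rw [integral_finsetSum _ fun i _ => hY i]
  · have hp' : p ∈ Ioo (0:ℝ) 1 := ⟨h0, hp.2⟩
    refine (TH_le μ hX hp (∑ i, VaRr μ (Y i) p)).trans ?_
    simp_rw [fun i => TH_eq μ (hY i) hp']
    rw [Finset.sum_add_distrib, ← Finset.mul_sum]
    gcongr
    have ip : ∀ i, Integrable (fun ω => max (Y i ω - VaRr μ (Y i) p) 0) μ := fun i =>
      ((hY i).sub (integrable_const _)).pos_part
    rw [← integral_finsetSum _ fun i _ => ip i]
    apply integral_mono ((hX.sub (integrable_const _)).pos_part) (integrable_finsetSum _ fun i _ => ip i)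
    intro ω
    refine max_le ?_ (Finset.sum_nonneg fun i _ => le_max_right _ _)
    show X ω - ∑ i, VaRr μ (Y i) p ≤ ∑ i, max (Y i ω - VaRr μ (Y i) p) 0
    rw [← hs, ← Finset.sum_sub_distrib]
    exact Finset.sum_le_sum fun i _ => le_max_left _ _

lemma TH_interval (μ : Measure Ω) (X : Ω → ℝ) {p : ℝ} (hp : p ≤ 1) :
    TH μ X p = ∫ q in p..1, VaRr μ X q := by
  rw [TH, intervalIntegral.integral_of_le hp, integral_Ioc_eq_integral_Ioo]

lemma TH_contOn (μ : Measure Ω) [IsProbabilityMeasure μ] {X : Ω → ℝ} (hX : Integrable X μ) :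
    ContinuousOn (TH μ X) (Icc 0 1) := by
  have hi : IntervalIntegrable (VaRr μ X) volume 0 1 :=
    (intervalIntegrable_iff_integrableOn_Ioo_of_le zero_le_one).2 (VaRr_integrable μ hX)
  have h := intervalIntegral.continuousOn_primitive_interval_left
    (a := 0) (b := 1) (f := VaRr μ X) (μ := volume)
    (by rw [uIcc_of_le zero_le_one, integrableOn_Icc_iff_integrableOn_Ioo]; exact VaRr_integrable μ hX)
  rw [uIcc_of_le zero_le_one] at h
  exact h.congr fun p hp => TH_interval μ X hp.2

lemma TH_tendsto (μ : Measure Ω) [IsProbabilityMeasure μ] {X : Ω → ℝ} (hX : Integrable X μ) :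
    Tendsto (TH μ X) (nhdsWithin 1 (Ioo 0 1)) (nhds 0) := by
  have h := (TH_contOn μ hX 1 (right_mem_Icc.2 zero_le_one)).mono Ioo_subset_Icc_self
  have h1 : TH μ X 1 = 0 := by simp [TH]
  rw [ContinuousWithinAt, h1] at h
  exact h

lemma TH_sub_eq (μ : Measure Ω) [IsProbabilityMeasure μ] {X : Ω → ℝ} (hX : Integrable X μ)
    {p b : ℝ} (hp : p ∈ Ioo (0:ℝ) 1) (hb : b ∈ Ioo (0:ℝ) 1) :
    TH μ X p - TH μ X b = ∫ q in p..b, VaRr μ X q := by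
  have hi : IntervalIntegrable (VaRr μ X) volume 0 1 :=
    (intervalIntegrable_iff_integrableOn_Ioo_of_le zero_le_one).2 (VaRr_integrable μ hX)
  have m : ∀ x ∈ Ioo (0:ℝ) 1, x ∈ uIcc (0:ℝ) 1 := fun x hx => by
    rw [uIcc_of_le zero_le_one]; exact Ioo_subset_Icc_self hx
  have i1 : IntervalIntegrable (VaRr μ X) volume p b :=
    hi.mono_set (uIcc_subset_uIcc (m p hp) (m b hb))
  have i2 : IntervalIntegrable (VaRr μ X) volume b 1 :=
    hi.mono_set (uIcc_subset_uIcc (m b hb) right_mem_uIcc)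
  rw [TH_interval μ X hp.2.le, TH_interval μ X hb.2.le,
    ← intervalIntegral.integral_add_adjacent_intervals i1 i2]
  ring

lemma TH_hasDerivAt (μ : Measure Ω) [IsProbabilityMeasure μ] {X : Ω → ℝ} (hX : Integrable X μ)
    {p : ℝ} (hp : p ∈ Ioo (0:ℝ) 1) (hc : ContinuousAt (VaRr μ X) p) :
    HasDerivAt (TH μ X) (-VaRr μ X p) p := by
  have hi : IntervalIntegrable (VaRr μ X) volume 0 1 :=
    (intervalIntegrable_iff_integrableOn_Ioo_of_le zero_le_one).2 (VaRr_integrable μ hX)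
  have i2 : IntervalIntegrable (VaRr μ X) volume p 1 :=
    hi.mono_set (uIcc_subset_uIcc (by rw [uIcc_of_le zero_le_one]; exact Ioo_subset_Icc_self hp)
      right_mem_uIcc)
  have hn : Ioo (0:ℝ) 1 ∈ nhds p := isOpen_Ioo.mem_nhds hp
  have hm : StronglyMeasurableAtFilter (VaRr μ X) (nhds p) :=
    ⟨Ioo 0 1, hn, (VaRr_aem μ hX.aemeasurable).aestronglyMeasurable⟩
  refine (intervalIntegral.integral_hasDerivAt_left i2 hm hc).congr_of_eventuallyEq ?_
  filter_upwards [hn] with q hq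
  exact TH_interval μ X hq.2.le

lemma split (μ : Measure Ω) [IsProbabilityMeasure μ] {W : Ω → ℝ} (hW : Integrable W μ)
    (h v : ℝ → ℝ) (hh : ConcaveOn ℝ (Ioo 0 1) h) (hv : ConcaveOn ℝ (Ioo 0 1) v)
    (hh0 : Tendsto h (nhdsWithin 1 (Ioo 0 1)) (nhds 0))
    (hv0 : Tendsto v (nhdsWithin 1 (Ioo 0 1)) (nhds 0))
    (hle : ∀ p ∈ Ioo (0:ℝ) 1, TH μ W p ≤ h p + v p) :
    ∃ f : ℝ → ℝ, Integrable (fun ω => f (W ω)) μ ∧ ∀ p ∈ Ioo (0:ℝ) 1,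
      TH μ (fun ω => f (W ω)) p ≤ h p ∧ TH μ (fun ω => W ω - f (W ω)) p ≤ v p := by
  set u := TH μ W with hu
  set V := VaRr μ W with hV
  obtain ⟨w, hw, huw, hwle⟩ := env u v h (TH_concave μ hW) hv hh hle
  have hint : interior (Ioo (0:ℝ) 1) = Ioo 0 1 := isOpen_Ioo.interior_eq
  have c1 : ConvexOn ℝ (Ioo 0 1) (fun p => - w p) := hw.neg
  have c2 : ConvexOn ℝ (Ioo 0 1) (fun p => w p - u p) := by
    have := huw.neg
    refine this.congr fun p hp => ?_
    simp
  let k1 : ℝ → ℝ := fun p => derivWithin (fun p => - w p) (Ioi p) p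
  let k2 : ℝ → ℝ := fun p => derivWithin (fun p => w p - u p) (Ioi p) p
  have d1 : ∀ p ∈ Ioo (0:ℝ) 1, HasDerivWithinAt (fun p => - w p) (k1 p) (Ioi p) p := fun p hp =>
    c1.hasDerivWithinAt_rightDeriv_of_mem_interior (by rwa [hint])
  have d2 : ∀ p ∈ Ioo (0:ℝ) 1, HasDerivWithinAt (fun p => w p - u p) (k2 p) (Ioi p) p := fun p hp =>
    c2.hasDerivWithinAt_rightDeriv_of_mem_interior (by rwa [hint])
  have m1 : MonotoneOn k1 (Ioo 0 1) := by
    have := c1.monotoneOn_rightDeriv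
    rwa [hint] at this
  have m2 : MonotoneOn k2 (Ioo 0 1) := by
    have := c2.monotoneOn_rightDeriv
    rwa [hint] at this
  let S : Set ℝ := {p | p ∈ Ioo (0:ℝ) 1 ∧ ContinuousAt V p}
  have hk : ∀ p ∈ S, k1 p + k2 p = V p := by
    intro p hp
    have e1 := (d1 p hp.1).add (d2 p hp.1)
    have e2 := (TH_hasDerivAt μ hW hp.1 hp.2).neg.hasDerivWithinAt (s := Ioi p)
    have e3 : ((fun p => - w p) + fun p => w p - u p) = - TH μ W := by
      funext q; simp only [hu, Pi.add_apply, Pi.neg_apply]; ring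
    rw [e3] at e1
    have := (uniqueDiffWithinAt_Ioi p).eq_deriv _ e1 e2
    rw [this, neg_neg]
  have hkey : ∀ p ∈ S, ∀ p' ∈ S, |2 * (k1 p - k1 p') - (V p - V p')| ≤ |V p - V p'| := by
    have aux : ∀ p ∈ S, ∀ p' ∈ S, p ≤ p' → |2 * (k1 p - k1 p') - (V p - V p')| ≤ |V p - V p'| := by
      intro p hp p' hp' hpp
      have a1 := m1 hp.1 hp'.1 hpp
      have a2 := m2 hp.1 hp'.1 hpp
      have b1 := hk p hp
      have b2 := hk p' hp'
      rw [abs_of_nonpos (show V p - V p' ≤ 0 by linarith), abs_le]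
      constructor <;> linarith
    intro p hp p' hp'
    rcases le_total p p' with h1 | h1
    · exact aux p hp p' hp' h1
    · have := aux p' hp' p hp h1
      rw [abs_sub_comm (V p) (V p')]
      refine le_trans (le_of_eq ?_) this
      rw [← abs_neg]
      congr 1
      ring
  let σ : ℝ → ℝ := Function.invFunOn V S
  have hσ1 : ∀ y ∈ V '' S, σ y ∈ S := fun y hy => Function.invFunOn_mem hy
  have hσ2 : ∀ y ∈ V '' S, V (σ y) = y := fun y hy => Function.invFunOn_eq hy
  have hL : LipschitzOnWith 1 (fun y => 2 * k1 (σ y) - y) (V '' S) := by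
    apply LipschitzOnWith.of_dist_le_mul
    intro x hx y hy
    have := hkey _ (hσ1 x hx) _ (hσ1 y hy)
    rw [hσ2 x hx, hσ2 y hy] at this
    rw [Real.dist_eq, Real.dist_eq]
    simp only [NNReal.coe_one, one_mul]
    refine le_trans (le_of_eq ?_) this
    congr 1
    ring
  obtain ⟨G, hG, hGe⟩ := hL.extend_real
  have hG' : ∀ x y, |G x - G y| ≤ |x - y| := by
    intro x y
    have := hG.dist_le_mul x y
    simpa [Real.dist_eq] using this
  let f : ℝ → ℝ := fun y => (G y + y) / 2
  have hfc : Continuous f := by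
    have := hG.continuous
    fun_prop
  have hfm : Monotone f := by
    intro x y hxy
    have := hG' x y
    rw [abs_of_nonpos (show x - y ≤ 0 by linarith)] at this
    have := (abs_le.1 this).2
    simp only [f]
    linarith
  have hgm : Monotone (fun y => y - f y) := by
    intro x y hxy
    have := hG' x y
    rw [abs_of_nonpos (show x - y ≤ 0 by linarith)] at this
    have := (abs_le.1 this).1
    simp only [f]
    linarith
  have hfV : ∀ p ∈ S, f (V p) = k1 p := by
    intro p hp
    have hy : V p ∈ V '' S := ⟨p, hp, rfl⟩
    have e1 := hGe hy
    have e2 := hkey _ (hσ1 _ hy) p hp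
    rw [hσ2 _ hy] at e2
    simp only [sub_self, abs_zero, sub_zero] at e2
    have e3 := abs_eq_zero.1 (le_antisymm e2 (abs_nonneg _))
    simp only at e1
    simp only [f]
    rw [← e1]
    linarith
  have hfi : Integrable (fun ω => f (W ω)) μ := by
    have hdom : Integrable (fun ω => |G 0| + |W ω|) μ := (integrable_const _).add hW.abs
    refine hdom.mono' (hfc.comp_aestronglyMeasurable hW.aestronglyMeasurable) ?_
    refine ae_of_all _ fun ω => ?_
    rw [Real.norm_eq_abs]
    have h1 := hG' (W ω) 0
    rw [sub_zero] at h1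
    simp only [f]
    have h2 := abs_le.1 h1
    have h3 := neg_abs_le (W ω)
    have h4 := le_abs_self (W ω)
    have h5 := neg_abs_le (G 0)
    have h6 := le_abs_self (G 0)
    rw [abs_le]
    constructor <;> linarith [h2.1, h2.2, abs_nonneg (G 0)]
  refine ⟨f, hfi, ?_⟩
  have hw0 : Tendsto w (nhdsWithin 1 (Ioo 0 1)) (nhds 0) := by
    have h1 : Tendsto (fun p => u p - v p) (nhdsWithin 1 (Ioo 0 1)) (nhds 0) := by
      simpa using (TH_tendsto μ hW).sub hv0
    refine tendsto_of_tendsto_of_tendsto_of_le_of_le' h1 hh0 ?_ ?_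
    · filter_upwards [self_mem_nhdsWithin] with p hp
      linarith [(hwle p hp).2]
    · filter_upwards [self_mem_nhdsWithin] with p hp
      exact (hwle p hp).1
  have hwc := hw.continuousOn isOpen_Ioo
  have hScount : {x | x ∈ Ioo (0:ℝ) 1 ∧ x ∉ S}.Countable := by
    refine (VaRr_mono μ hW.aemeasurable).countable_not_continuousWithinAt.mono ?_
    rintro x ⟨hx, hxS⟩
    refine ⟨hx, fun hc => hxS ⟨hx, hc.continuousAt (isOpen_Ioo.mem_nhds hx)⟩⟩
  have hdiff : ∀ p ∈ Ioo (0:ℝ) 1, ∀ b ∈ Ioo (0:ℝ) 1, p < b →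
      TH μ (fun ω => f (W ω)) p - w p = TH μ (fun ω => f (W ω)) b - w b := by
    intro p hp b hb hpb
    have hsub : Icc p b ⊆ Ioo (0:ℝ) 1 := fun q hq => ⟨lt_of_lt_of_le hp.1 hq.1, lt_of_le_of_lt hq.2 hb.2⟩
    have e1 := TH_sub_eq μ hfi hp hb
    have e2 : ∫ q in p..b, VaRr μ (fun ω => f (W ω)) q = ∫ q in p..b, k1 q := by
      apply intervalIntegral.integral_congr_ae
      filter_upwards [hScount.ae_notMem volume] with q hq hqpb
      rw [uIoc_of_le hpb.le] at hqpb
      have hqI := hsub (Ioc_subset_Icc_self hqpb)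
      have hqS : q ∈ S := by
        by_contra hc
        exact hq ⟨hqI, hc⟩
      rw [VaRr_comp μ hW.aemeasurable hfm hfc hqI]
      exact hfV q hqS
    have e3 : ∫ q in p..b, k1 q = - w b - - w p := by
      apply intervalIntegral.integral_eq_sub_of_hasDeriv_right_of_le hpb.le (f := fun p => - w p)
      · exact (hwc.mono hsub).neg
      · intro x hx
        exact d1 x (hsub (Ioo_subset_Icc_self hx))
      · apply MonotoneOn.intervalIntegrable
        rw [uIcc_of_le hpb.le]
        exact m1.mono hsub
    linarith
  have hne : (nhdsWithin (1:ℝ) (Ioo 0 1)).NeBot := by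
    rw [nhdsWithin_Ioo_eq_nhdsLT zero_lt_one]
    infer_instance
  have heq : ∀ p ∈ Ioo (0:ℝ) 1, TH μ (fun ω => f (W ω)) p = w p := by
    intro p hp
    have t1 : Tendsto (fun b => TH μ (fun ω => f (W ω)) b - w b) (nhdsWithin 1 (Ioo 0 1)) (nhds 0) := by
      simpa using (TH_tendsto μ hfi).sub hw0
    have t2 : Tendsto (fun b => TH μ (fun ω => f (W ω)) b - w b) (nhdsWithin 1 (Ioo 0 1))
        (nhds (TH μ (fun ω => f (W ω)) p - w p)) := by
      refine tendsto_const_nhds.congr' ?_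
      have : ∀ᶠ b in nhdsWithin (1:ℝ) (Ioo 0 1), p < b :=
        (lt_mem_nhds hp.2).filter_mono nhdsWithin_le_nhds
      filter_upwards [self_mem_nhdsWithin, this] with b hb hpb
      exact hdiff p hp b hb hpb
    linarith [tendsto_nhds_unique t1 t2]
  intro p hp
  refine ⟨by rw [heq p hp]; exact (hwle p hp).1, ?_⟩
  have e : TH μ (fun ω => W ω - f (W ω)) p = TH μ W p - TH μ (fun ω => f (W ω)) p := by
    unfold TH
    have hs := TH_sub p hp.1.le
    rw [← integral_sub ((VaRr_integrable μ hW).mono_set hs) ((VaRr_integrable μ hfi).mono_set hs)]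
    apply setIntegral_congr_fun measurableSet_Ioo
    intro q hq
    have hgc : Continuous (fun y => y - f y) := by fun_prop
    have e1 := VaRr_comp μ hW.aemeasurable hgm hgc (hs hq)
    have e2 := VaRr_comp μ hW.aemeasurable hfm hfc (hs hq)
    simp only at e1 ⊢
    rw [e1, e2]
  rw [e, heq p hp]
  exact (hwle p hp).2

lemma TH_sum_concave (μ : Measure Ω) [IsProbabilityMeasure μ] {n : ℕ} {Z : Fin n → Ω → ℝ}
    (hZ : ∀ i, Integrable (Z i) μ) : ConcaveOn ℝ (Ioo 0 1) (fun p => ∑ i, TH μ (Z i) p) := by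
  refine ⟨convex_Ioo 0 1, ?_⟩
  intro x hx y hy a b ha hb hab
  simp only [Finset.smul_sum]
  rw [← Finset.sum_add_distrib]
  exact Finset.sum_le_sum fun i _ => (TH_concave μ (hZ i)).2 hx hy ha hb hab

lemma decomp (μ : Measure Ω) [IsProbabilityMeasure μ] (n : ℕ) : ∀ (W : Ω → ℝ) (_ : Integrable W μ)
    (Z : Fin (n+1) → Ω → ℝ) (_ : ∀ i, Integrable (Z i) μ)
    (_ : ∀ p ∈ Ioo (0:ℝ) 1, TH μ W p ≤ ∑ i, TH μ (Z i) p),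
    ∃ Y : Fin (n+1) → Ω → ℝ, (∀ i, Integrable (Y i) μ) ∧ (∀ ω, ∑ i, Y i ω = W ω) ∧
      ∀ i, ∀ p ∈ Ioo (0:ℝ) 1, TH μ (Y i) p ≤ TH μ (Z i) p := by
  induction n with
  | zero =>
    intro W hW Z hZ hle
    refine ⟨fun _ => W, fun _ => hW, fun ω => by simp, fun i p hp => ?_⟩
    have := hle p hp
    rw [Fin.sum_univ_one] at this
    rwa [Fin.eq_zero i]
  | succ n ih =>
    intro W hW Z hZ hle
    obtain ⟨f, hfi, hf⟩ := split μ hW (TH μ (Z 0)) (fun p => ∑ i : Fin (n+1), TH μ (Z i.succ) p)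
      (TH_concave μ (hZ 0)) (TH_sum_concave μ fun i => hZ i.succ) (TH_tendsto μ (hZ 0))
      (by simpa using tendsto_finsetSum Finset.univ
            (fun (i : Fin (n+1)) _ => TH_tendsto μ (hZ i.succ)))
      (fun p hp => by rw [← Fin.sum_univ_succ (fun i => TH μ (Z i) p)]; exact hle p hp)
    obtain ⟨Y, hY1, hY2, hY3⟩ := ih (fun ω => W ω - f (W ω)) (hW.sub hfi) (fun i => Z i.succ)
      (fun i => hZ i.succ) (fun p hp => (hf p hp).2)
    refine ⟨Fin.cons (fun ω => f (W ω)) Y, ?_, ?_, ?_⟩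
    · intro i
      refine Fin.cases ?_ (fun j => ?_) i
      · simpa using hfi
      · simpa using hY1 j
    · intro ω
      rw [Fin.sum_univ_succ]
      simp [hY2]
    · intro i p hp
      refine Fin.cases ?_ (fun j => ?_) i
      · simpa using (hf p hp).1
      · simpa using hY3 j p hp

lemma ereal_coe_sum {n : ℕ} (a : Fin n → ℝ) : ∑ i, ((a i : ℝ) : EReal) = ((∑ i, a i : ℝ) : EReal) := by
  induction n with
  | zero => simp
  | succ n ih => rw [Fin.sum_univ_succ, Fin.sum_univ_succ, ih, EReal.coe_add]

lemma ES_eq (μ : Measure Ω) (X : Ω → ℝ) {p : ℝ} (hp : p ≠ 1) :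
    ES μ X p = (((1 - p)⁻¹ * TH μ X p : ℝ) : EReal) := by
  simp [ES, hp, TH]

lemma ES_one (μ : Measure Ω) (X : Ω → ℝ) :
    ES μ X 1 = essSup (fun ω => (X ω : EReal)) μ := by
  simp [ES]

lemma ES_ne_bot (μ : Measure Ω) [IsProbabilityMeasure μ] (X : Ω → ℝ) (p : ℝ) : ES μ X p ≠ ⊥ := by
  by_cases hp : p = 1
  · subst hp
    rw [ES_one]
    intro h
    have h1 : ∀ᵐ ω ∂μ, (X ω : EReal) ≤ essSup (fun ω => (X ω : EReal)) μ := ae_le_essSup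
    obtain ⟨ω, hω⟩ := h1.exists
    rw [h] at hω
    exact EReal.coe_ne_bot _ (le_bot_iff.1 hω)
  · rw [ES_eq μ X hp]
    exact EReal.coe_ne_bot _

lemma sum_ne_bot {n : ℕ} {a : Fin n → EReal} (h : ∀ i, a i ≠ ⊥) : ∑ i, a i ≠ ⊥ := by
  induction n with
  | zero => simp
  | succ n ih =>
    rw [Fin.sum_univ_succ]
    rw [Ne, EReal.add_eq_bot_iff]
    push Not
    exact ⟨h 0, ih fun i => h i.succ⟩

lemma sum_eq_top {n : ℕ} {a : Fin n → EReal} (h : ∀ i, a i ≠ ⊥) (ht : ∃ i, a i = ⊤) :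
    ∑ i, a i = ⊤ := by
  obtain ⟨i, hi⟩ := ht
  induction n with
  | zero => exact i.elim0
  | succ n ih =>
    rw [Fin.sum_univ_succ]
    rcases Fin.eq_zero_or_eq_succ i with rfl | ⟨j, rfl⟩
    · rw [hi]
      exact EReal.top_add_of_ne_bot (sum_ne_bot fun i => h i.succ)
    · rw [ih (fun i => h i.succ) j hi]
      exact EReal.add_top_of_ne_bot (h 0)

lemma ES_sum_le (μ : Measure Ω) [IsProbabilityMeasure μ] {n : ℕ} {Y : Fin n → Ω → ℝ} {X : Ω → ℝ}
    (hX : Integrable X μ) (hY : ∀ i, Integrable (Y i) μ) (hs : ∀ ω, ∑ i, Y i ω = X ω)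
    {p : ℝ} (hp : p ∈ Icc (0:ℝ) 1) : ES μ X p ≤ ∑ i, ES μ (Y i) p := by
  by_cases h1 : p = 1
  · subst h1
    simp_rw [ES_one]
    refine essSup_le_of_ae_le _ ?_
    have h2 : ∀ᵐ ω ∂μ, ∀ i, (Y i ω : EReal) ≤ essSup (fun ω => (Y i ω : EReal)) μ :=
      ae_all_iff.2 fun i => ae_le_essSup
    filter_upwards [h2] with ω hω
    rw [← hs, ← ereal_coe_sum]
    exact Finset.sum_le_sum fun i _ => hω i
  · have hp1 : p < 1 := lt_of_le_of_ne hp.2 h1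
    simp_rw [fun X => ES_eq μ X h1]
    rw [ereal_coe_sum, EReal.coe_le_coe_iff, ← Finset.mul_sum]
    have : 0 ≤ (1 - p)⁻¹ := inv_nonneg.2 (by linarith)
    exact mul_le_mul_of_nonneg_left (TH_sum_le μ hX hY hs ⟨hp.1, hp1⟩) this

lemma TH_add_const (μ : Measure Ω) [IsProbabilityMeasure μ] {X : Ω → ℝ} (hX : Integrable X μ)
    (c : ℝ) {p : ℝ} (hp : p ∈ Ico (0:ℝ) 1) :
    TH μ (fun ω => X ω + c) p = TH μ X p + (1 - p) * c := by
  have hs := TH_sub p hp.1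
  have e1 : (1 - p) * c = ∫ q in Ioo p 1, c := by
    rw [setIntegral_const]; simp [hp.2.le]
  have ic : IntegrableOn (fun _ : ℝ => c) (Ioo p 1) := integrable_const c
  rw [e1]
  unfold TH
  rw [← integral_add ((VaRr_integrable μ hX).mono_set hs) ic]
  apply setIntegral_congr_fun measurableSet_Ioo
  intro q hq
  exact VaRr_comp μ hX.aemeasurable (f := fun x => x + c) (fun a b h => by simpa using h)
    (by fun_prop) (hs hq)

lemma ES_add_const_le (μ : Measure Ω) [IsProbabilityMeasure μ] {X : Ω → ℝ} (hX : Integrable X μ)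
    (c : ℝ) {p : ℝ} (hp : p ∈ Icc (0:ℝ) 1) :
    ES μ (fun ω => X ω + c) p ≤ c + ES μ X p := by
  by_cases h1 : p = 1
  · subst h1
    simp_rw [ES_one]
    refine essSup_le_of_ae_le _ ?_
    have h2 : ∀ᵐ ω ∂μ, (X ω : EReal) ≤ essSup (fun ω => (X ω : EReal)) μ := ae_le_essSup
    filter_upwards [h2] with ω hω
    rw [EReal.coe_add, add_comm]
    gcongr
  · have hp1 : p < 1 := lt_of_le_of_ne hp.2 h1
    rw [ES_eq _ _ h1, ES_eq _ _ h1, TH_add_const μ hX c ⟨hp.1, hp1⟩, ← EReal.coe_add,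
      EReal.coe_le_coe_iff]
    have : 1 - p ≠ 0 := by linarith
    apply le_of_eq
    field_simp
    ring

lemma cdf_eq_one_iff (μ : Measure Ω) [IsProbabilityMeasure μ] {X : Ω → ℝ} (hX : AEMeasurable X μ)
    (a : ℝ) : 1 ≤ ProbabilityTheory.cdf (μ.map X) a ↔ ∀ᵐ ω ∂μ, X ω ≤ a := by
  rw [← VaRr_mem_iff μ hX, ENNReal.ofReal_one]
  have h := mem_ae_iff_prob_eq_one₀ (μ := μ) (s := {ω | X ω ≤ a}) (nullMeasurableSet_le hX aemeasurable_const)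
  constructor
  · intro h1
    exact h.2 (le_antisymm prob_le_one h1)
  · intro h1
    exact (h.1 h1).ge

lemma ES_dom (μ : Measure Ω) [IsProbabilityMeasure μ] {Y Z : Ω → ℝ} (hY : Integrable Y μ)
    (hZ : Integrable Z μ) (hle : ∀ p ∈ Ioo (0:ℝ) 1, TH μ Y p ≤ TH μ Z p) {p : ℝ}
    (hp : p ∈ Icc (0:ℝ) 1) : ES μ Y p ≤ ES μ Z p := by
  by_cases h1 : p = 1
  · subst h1
    rw [ES_one, ES_one]
    by_contra hcon
    push Not at hcon
    obtain ⟨a, ha1, ha2⟩ := EReal.lt_iff_exists_real_btwn.1 hcon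
    obtain ⟨b, hb1, hb2⟩ := EReal.lt_iff_exists_real_btwn.1 ha1
    have hba : b < a := by exact_mod_cast hb2
    have hZb : ∀ᵐ ω ∂μ, Z ω ≤ b := by
      have h2 : ∀ᵐ ω ∂μ, (Z ω : EReal) ≤ essSup (fun ω => (Z ω : EReal)) μ := ae_le_essSup
      filter_upwards [h2] with ω hω
      exact_mod_cast hω.trans hb1.le
    have hFZ := (cdf_eq_one_iff μ hZ.aemeasurable b).2 hZb
    have hFY : ProbabilityTheory.cdf (μ.map Y) a < 1 := by
      by_contra h
      push Not at h
      have h2 := (cdf_eq_one_iff μ hY.aemeasurable a).1 h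
      have h3 : essSup (fun ω => (Y ω : EReal)) μ ≤ (a : EReal) := by
        refine essSup_le_of_ae_le _ ?_
        filter_upwards [h2] with ω hω
        exact_mod_cast hω
      exact absurd ha2 (not_lt.2 h3)
    set r := max (ProbabilityTheory.cdf (μ.map Y) a) (1/2) with hr
    have hrI : r ∈ Ioo (0:ℝ) 1 := ⟨lt_of_lt_of_le (by norm_num) (le_max_right _ _), max_lt hFY (by norm_num)⟩
    have hs := TH_sub r hrI.1.le
    have hconst : ∀ c : ℝ, ∫ q in Ioo r 1, c = (1 - r) * c := by
      intro c
      rw [setIntegral_const]; simp [hrI.2.le]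
    have ic : ∀ c : ℝ, IntegrableOn (fun _ : ℝ => c) (Ioo r 1) := fun c => integrable_const c
    have g1 : TH μ Z r ≤ (1 - r) * b := by
      rw [← hconst]
      apply setIntegral_mono_on ((VaRr_integrable μ hZ).mono_set hs) (ic b) measurableSet_Ioo
      intro q hq
      rw [VaRr_le_iff μ hZ.aemeasurable (hs hq)]
      exact hq.2.le.trans hFZ
    have g2 : (1 - r) * a ≤ TH μ Y r := by
      rw [← hconst]
      apply setIntegral_mono_on (ic a) ((VaRr_integrable μ hY).mono_set hs) measurableSet_Ioo
      intro q hq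
      by_contra h
      push Not at h
      have := (VaRr_le_iff μ hY.aemeasurable (hs hq) a).1 h.le
      have := le_max_left (ProbabilityTheory.cdf (μ.map Y) a) (1/2)
      linarith [hq.1]
    have := hle r hrI
    nlinarith [hrI.2]
  · have hp1 : p < 1 := lt_of_le_of_ne hp.2 h1
    rw [ES_eq _ _ h1, ES_eq _ _ h1, EReal.coe_le_coe_iff]
    have h0 : 0 ≤ (1 - p)⁻¹ := inv_nonneg.2 (by linarith)
    refine mul_le_mul_of_nonneg_left ?_ h0
    rcases eq_or_lt_of_le hp.1 with h2 | h2
    · subst h2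
      have tY := (TH_contOn μ hY 0 (left_mem_Icc.2 zero_le_one)).mono Ioo_subset_Icc_self
      have tZ := (TH_contOn μ hZ 0 (left_mem_Icc.2 zero_le_one)).mono Ioo_subset_Icc_self
      have hne : (nhdsWithin (0:ℝ) (Ioo 0 1)).NeBot := by
        rw [nhdsWithin_Ioo_eq_nhdsGT zero_lt_one]
        infer_instance
      refine le_of_tendsto_of_tendsto tY tZ ?_
      filter_upwards [self_mem_nhdsWithin] with q hq
      exact hle q hq
    · exact hle p ⟨h2, hp1⟩

lemma lower (μ : Measure Ω) [IsProbabilityMeasure μ] {n : ℕ} (Z Y : Fin n → Ω → ℝ) (X : Ω → ℝ)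
    (hX : Integrable X μ) (hY : ∀ i, Integrable (Y i) μ) (hs : ∀ ω, ∑ i, Y i ω = X ω) :
    adjES μ (fun p => ∑ i, ES μ (Z i) p) X ≤ ∑ i, adjES μ (fun p => ES μ (Z i) p) (Y i) := by
  unfold adjES
  refine iSup₂_le fun p hp => ?_
  by_cases ht : ∃ i, ES μ (Z i) p = ⊤
  · beta_reduce
    rw [sum_eq_top (fun i => ES_ne_bot μ (Z i) p) ht, EReal.sub_top]
    exact bot_le
  · push Not at ht
    refine EReal.sub_le_of_le_add ((ES_sum_le μ hX hY hs hp).trans ?_)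
    rw [← Finset.sum_add_distrib]
    refine Finset.sum_le_sum fun i _ => ?_
    rw [← EReal.sub_le_iff_le_add (Or.inl (ES_ne_bot μ (Z i) p)) (Or.inl (ht i))]
    exact le_iSup₂ (f := fun p (_ : p ∈ Icc (0:ℝ) 1) => ES μ (Y i) p - ES μ (Z i) p) p hp

lemma upper (μ : Measure Ω) [IsProbabilityMeasure μ] {n : ℕ} (hn : 0 < n) (Z : Fin n → Ω → ℝ)
    (hZ : ∀ i, Integrable (Z i) μ) (X : Ω → ℝ) (hX : Integrable X μ) :
    infConv μ (fun i => adjES μ (fun p => ES μ (Z i) p)) X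
      ≤ adjES μ (fun p => ∑ i, ES μ (Z i) p) X := by
  obtain ⟨m, rfl⟩ : ∃ m, n = m + 1 := ⟨n - 1, by omega⟩
  have hval : ∀ p ∈ Ico (0:ℝ) 1, (((1 - p)⁻¹ * TH μ X p - ∑ i, (1 - p)⁻¹ * TH μ (Z i) p : ℝ) : EReal)
      ≤ adjES μ (fun p => ∑ i, ES μ (Z i) p) X := by
    intro p hp
    have h1 : p ≠ 1 := hp.2.ne
    have := le_iSup₂ (f := fun p (_ : p ∈ Icc (0:ℝ) 1) => ES μ X p - ∑ i, ES μ (Z i) p) p ⟨hp.1, hp.2.le⟩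
    refine le_trans (le_of_eq ?_) this
    simp_rw [fun X => ES_eq μ X h1]
    rw [ereal_coe_sum, EReal.coe_sub]
  generalize adjES μ (fun p => ∑ i, ES μ (Z i) p) X = A at hval
  induction A with
  | bot =>
    exact absurd (le_bot_iff.1 (hval 0 ⟨le_rfl, zero_lt_one⟩)) (EReal.coe_ne_bot _)
  | top => exact le_top
  | coe c =>
    let d : Fin (m+1) → ℝ := fun i => if i = 0 then c else 0
    have hd : ∑ i, d i = c := by simp [d]
    have hle : ∀ p ∈ Ioo (0:ℝ) 1, TH μ X p ≤ ∑ i, TH μ (fun ω => Z i ω + d i) p := by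
      intro p hp
      have hp' : p ∈ Ico (0:ℝ) 1 := ⟨hp.1.le, hp.2⟩
      simp_rw [fun i => TH_add_const μ (hZ i) (d i) hp']
      rw [Finset.sum_add_distrib, ← Finset.mul_sum, hd]
      have h1 := EReal.coe_le_coe_iff.1 (hval p hp')
      rw [← Finset.mul_sum, ← mul_sub, inv_mul_le_iff₀ (by linarith [hp.2])] at h1
      linarith
    have hZd : ∀ i, Integrable (fun ω => Z i ω + d i) μ := fun i => (hZ i).add (integrable_const _)
    obtain ⟨Y, hY1, hY2, hY3⟩ := decomp μ m X hX (fun i ω => Z i ω + d i) hZd hle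
    unfold infConv
    refine (iInf₂_le Y ⟨hY1, hY2⟩).trans ?_
    rw [← hd, ← ereal_coe_sum]
    refine Finset.sum_le_sum fun i _ => ?_
    unfold adjES
    refine iSup₂_le fun p hp => ?_
    apply EReal.sub_le_of_le_add
    exact (ES_dom μ (hY1 i) (hZd i) (hY3 i) hp).trans (ES_add_const_le μ (hZ i) (d i) hp)

/-- For benchmarks `Z_1, …, Z_n ∈ L¹` with ES risk profiles
`g_i(p) = ES_p(Z_i)`, the inf-convolution of the benchmark-adjusted Expected
Shortfalls equals the adjusted Expected Shortfall with profile `g_1 + ⋯ + g_n`. -/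
theorem stmt19 (μ : Measure Ω) [IsProbabilityMeasure μ] (hatomless : Atomless μ)
    (n : ℕ) (hn : 0 < n) (Z : Fin n → Ω → ℝ) (hZ : ∀ i, Integrable (Z i) μ)
    (X : Ω → ℝ) (hX : Integrable X μ) :
    infConv μ (fun i => adjES μ (fun p => ES μ (Z i) p)) X
      = adjES μ (fun p => ∑ i, ES μ (Z i) p) X := by
  apply le_antisymm (upper μ hn Z hZ X hX)
  unfold infConv
  exact le_iInf₂ fun Y hY => lower μ Z Y X hX hY.1 hY.2
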